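/- arXiv:2405.10088 — 2 statements merged into one kernel-verified Lean document; each statement's English description precedes it below -/
import Mathlib

section
/- Let Γ be a finite vertex-transitive graph and p ≥ 3 a prime. If Aut(Γ) contains a p-cycle, then either: (a) μ(Γ) = 2, so Γ ≅ Θ[K_m] or Γ ≅ Θ[mK_1] for some m ≥ 2 and vertex-transitive graph Θ; or (b) Γ ≅ Θ[Σ_p], where Σ_p is a circulant graph on p vertices and Θ is a vertex-transitive graph; in case (b), μ(Γ) = 2 if Σ_p is isomorphic to K_p or to pK_1, and μ(Γ) = p − 1 otherwise. -/
open Equiv Pointwise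

/-- A graph is vertex-transitive if its automorphism group is transitive on the
vertices. -/
def IsVertexTransitive {V : Type*} (Γ : SimpleGraph V) : Prop :=
  ∀ u v : V, ∃ e : Γ ≃g Γ, e u = v

/-- The motion of a graph: the least number of vertices moved by a non-identity
automorphism (i.e. the minimal degree of its automorphism group). -/
noncomputable def motion {V : Type*} [Fintype V] [DecidableEq V] (Γ : SimpleGraph V) : ℕ :=
  sInf {n | ∃ e : Γ ≃g Γ, (e.toEquiv : Equiv.Perm V) ≠ 1 ∧
    (Equiv.Perm.support (e.toEquiv : Equiv.Perm V)).card = n}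

/-- The lexicographic product `Θ[Δ]`: the vertex set is `VΔ × VΘ`, and
`(δ₁,θ₁) ∼ (δ₂,θ₂)` iff `θ₁ ∼ θ₂` in `Θ`, or `θ₁ = θ₂` and `δ₁ ∼ δ₂` in `Δ`. -/
def lexProd {α β : Type*} (Θ : SimpleGraph α) (Δ : SimpleGraph β) :
    SimpleGraph (β × α) :=
  SimpleGraph.fromRel (fun x y => Θ.Adj x.2 y.2 ∨ (x.2 = y.2 ∧ Δ.Adj x.1 y.1))

/-- A circulant graph on `ZMod p`: a Cayley graph of the cyclic group of order `p`,
i.e. a graph invariant under all translations. -/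
def IsCirculant {p : ℕ} (Sg : SimpleGraph (ZMod p)) : Prop :=
  ∀ c x y : ZMod p, Sg.Adj x y ↔ Sg.Adj (x + c) (y + c)



open Polynomial in
theorem exists_powerSum_ne {p : ℕ} [Fact p.Prime] (U : Finset (ZMod p)) (h0 : (0 : ZMod p) ∉ U)
    (hne : U.Nonempty) : ∃ m, 1 ≤ m ∧ m ≤ U.card ∧ ∑ u ∈ U, u ^ m ≠ 0 := by
  classical
  by_contra hcon
  push Not at hcon
  obtain ⟨u0, hu0⟩ := hne
  set q : (ZMod p)[X] := X * ∏ u ∈ U.erase u0, (X - C u) with hq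
  have hdeg : q.natDegree ≤ U.card := by
    have h1 : (∏ u ∈ U.erase u0, (X - C u) : (ZMod p)[X]).natDegree ≤ (U.erase u0).card := by
      rw [natDegree_prod_of_monic _ _ (fun u _ => monic_X_sub_C u)]
      simp
    have h2 : q.natDegree ≤ 1 + (U.erase u0).card := by
      refine natDegree_mul_le.trans ?_
      have := natDegree_X_le (R := ZMod p)
      omega
    have := Finset.card_erase_add_one hu0
    omega
  have hq0 : q.coeff 0 = 0 := by simp [hq]
  have hs : ∑ u ∈ U, q.eval u = 0 := by
    have : ∀ u ∈ U, q.eval u = ∑ j ∈ Finset.range (U.card + 1), q.coeff j * u ^ j := by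
      intro u _
      exact eval_eq_sum_range' (by omega) u
    rw [Finset.sum_congr rfl this, Finset.sum_comm]
    refine Finset.sum_eq_zero fun j hj => ?_
    rw [← Finset.mul_sum]
    rcases Nat.eq_zero_or_pos j with rfl | hjp
    · simp [hq0]
    · rw [hcon j hjp (by simp at hj; omega), mul_zero]
  rw [Finset.sum_eq_single_of_mem u0 hu0] at hs
  · rw [hq, eval_mul, eval_X, eval_prod] at hs
    rcases mul_eq_zero.1 hs with h | h
    · exact h0 (h ▸ hu0)
    · rw [Finset.prod_eq_zero_iff] at h
      obtain ⟨a, ha, h⟩ := h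
      simp only [eval_sub, eval_X, eval_C] at h
      exact (Finset.mem_erase.1 ha).1 (sub_eq_zero.1 h).symm
  · intro b hb hne
    rw [hq, eval_mul, eval_prod, Finset.prod_eq_zero (Finset.mem_erase.2 ⟨hne, hb⟩) (by simp), mul_zero]

open Polynomial in
theorem affine_of_preserves {p : ℕ} [Fact p.Prime] (U : Finset (ZMod p)) (h0 : (0 : ZMod p) ∉ U)
    (hne : U.Nonempty) (hcard : 2 * U.card ≤ p - 1) (σ : ZMod p → ZMod p)
    (hinj : Function.Injective σ)
    (hU : ∀ x, ∀ u ∈ U, σ (x + u) - σ x ∈ U) : ∃ a b, ∀ x, σ x = a * x + b := by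
  classical
  have hp : p.Prime := Fact.out
  have hp2 := hp.two_le
  set f : (ZMod p)[X] := Lagrange.interpolate Finset.univ id σ with hf
  have hfe : ∀ x, f.eval x = σ x := fun x =>
    Lagrange.eval_interpolate_at_node (v := id) σ (Set.injOn_id _) (Finset.mem_univ x)
  have hfd : f.natDegree < p := by
    have h1 := Lagrange.degree_interpolate_lt (s := Finset.univ) (v := id) σ (Set.injOn_id _)
    rw [← hf, Finset.card_univ, ZMod.card] at h1
    by_cases hz : f = 0
    · rw [hz]; simp; omega
    · exact (natDegree_lt_iff_degree_lt hz).2 h1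
  obtain ⟨m, hm1, hmU, hmS⟩ := exists_powerSum_ne U h0 hne
  -- take the least such m
  have hex : ∃ m, 1 ≤ m ∧ ∑ u ∈ U, u ^ m ≠ 0 := ⟨m, hm1, hmS⟩
  obtain ⟨m', ⟨hm1', hmS'⟩, hmin⟩ : ∃ m, (1 ≤ m ∧ ∑ u ∈ U, u ^ m ≠ 0) ∧
      ∀ j, 1 ≤ j → j < m → ∑ u ∈ U, u ^ j = 0 := by
    refine ⟨Nat.find hex, Nat.find_spec hex, fun j hj hlt => ?_⟩
    by_contra hc
    exact Nat.find_min hex hlt ⟨hj, hc⟩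
  have hmle : m' ≤ m := by
    by_contra hc
    exact hmS (hmin m hm1 (by omega))
  have hm2 : 2 * m' ≤ p - 1 := by omega
  clear hmle hmS hmU hm1 hex
  clear m
  by_cases hn : f.natDegree ≤ 1
  · refine ⟨f.coeff 1, f.coeff 0, fun x => ?_⟩
    rw [← hfe x, eval_eq_sum_range' (n := 2) (by omega) x]
    simp [Finset.sum_range_succ, add_comm]
  exfalso
  push Not at hn
  set n := f.natDegree with hn'
  set k := (p - 1) / n with hk
  have hkn : k * n < p := by
    have : k * n ≤ p - 1 := Nat.div_mul_le_self (p - 1) n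
    omega
  have hkm : m' ≤ k * n := by
    have h1 : p - 1 < k * n + n := by
      have := Nat.lt_div_mul_add (a := p - 1) (b := n) (by omega)
      simpa [hk] using this
    have h2 : 1 ≤ k := by
      rw [hk]; exact Nat.div_pos (by omega) (by omega)
    have h3 : n ≤ k * n := Nat.le_mul_of_pos_left _ h2
    omega
  have hf0 : f ≠ 0 := by rintro h; rw [hn', h] at hn; simp at hn
  set Q := f ^ k with hQ
  have hQd : Q.natDegree = k * n := by rw [hQ, natDegree_pow]
  set N := k * n with hN
  -- the polynomial identity
  have hid : ∑ u ∈ U, taylor u Q = ∑ u ∈ U, (f + C u) ^ k := by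
    have hL : (∑ u ∈ U, taylor u Q).natDegree < p := by
      refine lt_of_le_of_lt (natDegree_sum_le_of_forall_le U _ (n := N) fun u _ => ?_) hkn
      rw [natDegree_taylor, hQd]
    have hR : (∑ u ∈ U, (f + C u) ^ k).natDegree < p := by
      refine lt_of_le_of_lt (natDegree_sum_le_of_forall_le U _ (n := N) fun u _ => ?_) hkn
      rw [natDegree_pow, natDegree_add_C]
    refine eq_of_natDegree_lt_card_of_eval_eq' _ _ Finset.univ (fun x _ => ?_) ?_
    · rw [eval_finsetSum, eval_finsetSum]
      simp only [taylor_eval, hQ, eval_pow, eval_add, eval_C, hfe]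
      have himg : U.image (fun u => σ (x + u) - σ x) = U := by
        refine Finset.eq_of_subset_of_card_le ?_ ?_
        · intro y hy
          obtain ⟨u, hu, rfl⟩ := Finset.mem_image.1 hy
          exact hU x u hu
        · rw [Finset.card_image_of_injective]
          intro a b hab
          have := hinj (sub_left_inj.1 hab)
          simpa using this
      conv_rhs => rw [← himg]
      rw [Finset.sum_image]
      · refine Finset.sum_congr rfl fun u _ => ?_
        ring
      · intro a _ b _ hab
        have := hinj (sub_left_inj.1 hab)
        simpa using this
    · rw [Finset.card_univ, ZMod.card]; exact max_lt hL hR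
  have hc := congrArg (fun q => coeff q (N - m')) hid
  simp only [finsetSum_coeff, taylor_coeff] at hc
  -- left side
  have hH : ∀ u : ZMod p, (hasseDeriv (N - m') Q).eval u =
      ∑ j ∈ Finset.range (m' + 1), (((j + (N - m')).choose (N - m') : ℕ) : ZMod p) * Q.coeff (j + (N - m')) * u ^ j := by
    intro u
    rw [eval_eq_sum_range' (n := m' + 1) _ u]
    · simp only [hasseDeriv_coeff]
    · have := natDegree_hasseDeriv_le Q (N - m')
      omega
  have hLHS : ∑ u ∈ U, (hasseDeriv (N - m') Q).eval u =
      (U.card : ZMod p) * Q.coeff (N - m') + (N.choose (N - m') : ZMod p) * Q.coeff N * ∑ u ∈ U, u ^ m' := by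
    simp only [hH]
    rw [Finset.sum_comm]
    simp only [← Finset.mul_sum]
    obtain ⟨m0, rfl⟩ : ∃ m0, m' = m0 + 1 := ⟨m' - 1, by omega⟩
    rw [Finset.sum_range_succ, Finset.sum_range_succ', Finset.sum_eq_zero]
    · have : m0 + 1 + (N - (m0 + 1)) = N := by omega
      rw [this]; simp [mul_comm]
    · intro j hj
      rw [hmin (j + 1) (by omega) (by simp at hj; omega), mul_zero]
  have hRHS : ∑ u ∈ U, ((f + C u) ^ k).coeff (N - m') = (U.card : ZMod p) * Q.coeff (N - m') := by
    have : ∀ u ∈ U, ((f + C u) ^ k).coeff (N - m') =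
        ∑ j ∈ Finset.range (k + 1), ((f ^ (k - j)).coeff (N - m') * (k.choose j : ZMod p)) * u ^ j := by
      intro u _
      rw [add_comm, add_pow, finsetSum_coeff]
      refine Finset.sum_congr rfl fun j _ => ?_
      rw [← C_pow, mul_assoc, coeff_C_mul, ← C_eq_natCast, coeff_mul_C]; ring
    rw [Finset.sum_congr rfl this, Finset.sum_comm]
    simp only [← Finset.mul_sum]
    rw [Finset.sum_range_succ', Finset.sum_eq_zero]
    · simp [hQ, mul_comm]
    · intro j hj
      by_cases hjm : j + 1 < m'
      · rw [hmin (j + 1) (by omega) hjm, mul_zero]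
      · rw [coeff_eq_zero_of_natDegree_lt, zero_mul, zero_mul]
        rw [natDegree_pow, ← hn']
        have h1 : j + 1 ≤ k := by simp at hj; omega
        obtain ⟨t, ht⟩ := Nat.exists_eq_add_of_le h1
        have h2 : N = (j + 1) * n + t * n := by rw [hN, ht]; ring
        have h3 : k - (j + 1) = t := by omega
        rw [h3]
        have h4 : (j + 1) * 2 ≤ (j + 1) * n := Nat.mul_le_mul_left _ hn
        omega
  rw [hLHS, hRHS] at hc
  have hz : (N.choose (N - m') : ZMod p) * Q.coeff N * ∑ u ∈ U, u ^ m' = 0 := by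
    simpa using hc
  have hlc : Q.coeff N ≠ 0 := by
    rw [← hQd]
    exact leadingCoeff_ne_zero.2 (pow_ne_zero _ hf0)
  have hch : (N.choose (N - m') : ZMod p) ≠ 0 := by
    rw [Ne, ZMod.natCast_eq_zero_iff]
    intro hd
    have h1 : p ∣ N.factorial := by
      rw [← Nat.choose_mul_factorial_mul_factorial (Nat.sub_le N m')]
      exact (hd.mul_right _).mul_right _
    exact absurd ((hp.dvd_factorial).1 h1) (by omega)
  exact mul_ne_zero (mul_ne_zero hch hlc) hmS' hz

/-- Two vertices with the same neighbours (apart from themselves). -/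
def TwinRel {V : Type*} (Γ : SimpleGraph V) (u v : V) : Prop :=
  ∀ w, w ≠ u → w ≠ v → (Γ.Adj u w ↔ Γ.Adj v w)

/-- A parametrised `p`-set that is circulant and uniform towards the outside. -/
def GoodParam {V : Type*} {p : ℕ} (Γ : SimpleGraph V) (ψ : ZMod p → V) : Prop :=
  Function.Injective ψ ∧ (∀ c i j, Γ.Adj (ψ i) (ψ j) ↔ Γ.Adj (ψ (i + c)) (ψ (j + c))) ∧
    ∀ x, x ∉ Set.range ψ → ∀ i j, Γ.Adj x (ψ i) → Γ.Adj x (ψ j)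

theorem GoodParam.compl {V : Type*} {p : ℕ} {Γ : SimpleGraph V} {ψ : ZMod p → V}
    (h : GoodParam Γ ψ) : GoodParam Γᶜ ψ := by
  obtain ⟨h1, h2, h3⟩ := h
  refine ⟨h1, fun c i j => ?_, fun x hx i j hij => ?_⟩
  · rw [SimpleGraph.compl_adj, SimpleGraph.compl_adj, ← h2 c i j, h1.ne_iff, h1.ne_iff]
    simp
  · rw [SimpleGraph.compl_adj] at hij ⊢
    refine ⟨fun he => hx ⟨j, he.symm⟩, fun ha => hij.2 (h3 x hx j i ha)⟩

theorem GoodParam.map {V : Type*} {p : ℕ} {Γ : SimpleGraph V} {ψ : ZMod p → V}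
    (h : GoodParam Γ ψ) (e : Γ ≃g Γ) : GoodParam Γ (fun i => e (ψ i)) := by
  obtain ⟨h1, h2, h3⟩ := h
  refine ⟨e.injective.comp h1, fun c i j => ?_, fun x hx i j hij => ?_⟩
  · rw [e.map_adj_iff, e.map_adj_iff]; exact h2 c i j
  · obtain ⟨y, rfl⟩ := e.surjective x
    rw [e.map_adj_iff] at hij ⊢
    refine h3 y (fun ⟨k, hk⟩ => hx ⟨k, by simp [hk]⟩) i j hij

theorem closed_all {p : ℕ} [Fact p.Prime] (S : ZMod p → Prop) (d : ZMod p) (hd : d ≠ 0)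
    (hS : ∀ i, S i → S (i + d)) (i j : ZMod p) (hi : S i) : S j := by
  have h1 : ∀ n : ℕ, S (i + n * d) := by
    intro n
    induction n with
    | zero => simpa using hi
    | succ n ih =>
      have := hS _ ih
      convert this using 1
      push_cast; ring
  have := h1 ((j - i) / d).val
  rw [ZMod.natCast_zmod_val, div_mul_cancel₀ _ hd] at this
  simpa using this

theorem overlap_empty {V : Type*} {p : ℕ} [Fact p.Prime] {Γ : SimpleGraph V} {ψ χ : ZMod p → V}
    (hψ : GoodParam Γ ψ) (hχ : GoodParam Γ χ) {i0 i1 j0 j1 : ZMod p} (h0 : ψ i0 = χ j0)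
    (h1 : ψ i1 ∉ Set.range χ) (h2 : χ j1 ∉ Set.range ψ) (hn : ¬ Γ.Adj (χ j1) (ψ i1)) :
    ∀ i j, ¬ Γ.Adj (ψ i) (ψ j) := by
  intro i j hij
  have hx : ∀ i, ¬ Γ.Adj (χ j1) (ψ i) := fun i hi => hn (hψ.2.2 _ h2 i i1 hi)
  have hy : ∀ i, ψ i ∉ Set.range χ → ∀ j, ¬ Γ.Adj (ψ i) (χ j) := fun i hi j hj =>
    hx i (hχ.2.2 _ hi j j1 hj).symm
  have hd : j - i ≠ 0 := by
    intro h
    rw [sub_eq_zero.1 h] at hij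
    exact hij.ne rfl
  refine h1 (closed_all (fun i => ψ i ∈ Set.range χ) (j - i) hd ?_ i0 i1 ⟨j0, h0.symm⟩)
  rintro k ⟨l, hl⟩
  by_contra hc
  refine hy _ hc l ?_
  rw [hl]
  have := (hψ.2.1 (k - i) i j).1 hij
  rw [show i + (k - i) = k by ring, show j + (k - i) = k + (j - i) by ring] at this
  exact this.symm

theorem const_twin {V : Type*} {p : ℕ} [Fact p.Prime] {Γ : SimpleGraph V} {ψ : ZMod p → V}
    (hψ : GoodParam Γ ψ) (P : Prop) (h : ∀ i j, i ≠ j → (Γ.Adj (ψ i) (ψ j) ↔ P)) :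
    ∃ u v, u ≠ v ∧ TwinRel Γ u v := by
  refine ⟨ψ 0, ψ 1, hψ.1.ne zero_ne_one, fun w h0 h1 => ?_⟩
  by_cases hw : w ∈ Set.range ψ
  · obtain ⟨i, rfl⟩ := hw
    rw [h 0 i (by rintro rfl; exact h0 rfl), h 1 i (by rintro rfl; exact h1 rfl)]
  · rw [Γ.adj_comm _ w, Γ.adj_comm _ w]
    exact ⟨hψ.2.2 w hw 0 1, hψ.2.2 w hw 1 0⟩

theorem overlap_twin {V : Type*} {p : ℕ} [Fact p.Prime] {Γ : SimpleGraph V} {ψ χ : ZMod p → V}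
    (hψ : GoodParam Γ ψ) (hχ : GoodParam Γ χ) {i0 i1 j0 j1 : ZMod p} (h0 : ψ i0 = χ j0)
    (h1 : ψ i1 ∉ Set.range χ) (h2 : χ j1 ∉ Set.range ψ) :
    ∃ u v, u ≠ v ∧ TwinRel Γ u v := by
  by_cases hn : Γ.Adj (χ j1) (ψ i1)
  · have := overlap_empty hψ.compl hχ.compl h0 h1 h2 (by simp [hn])
    refine const_twin hψ True fun i j hij => ?_
    have h := this i j
    rw [SimpleGraph.compl_adj] at h
    have := hψ.1.ne hij
    tauto
  · have := overlap_empty hψ hχ h0 h1 h2 hn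
    exact const_twin hψ False fun i j hij => by simp [this i j]

/-- A cycle automorphism of prime length gives a parametrisation of its support. -/
theorem goodParam_of_cycle {V : Type*} [Fintype V] [DecidableEq V] {Γ : SimpleGraph V} {p : ℕ}
    [Fact p.Prime] (e : Γ ≃g Γ) (hc : Equiv.Perm.IsCycle (e.toEquiv : Equiv.Perm V))
    (hs : (Equiv.Perm.support (e.toEquiv : Equiv.Perm V)).card = p) :
    ∃ ψ : ZMod p → V, GoodParam Γ ψ := by
  have hp : p.Prime := Fact.out
  set g : Equiv.Perm V := e.toEquiv with hg
  have hadj : ∀ (n : ℕ) x y, Γ.Adj ((g ^ n) x) ((g ^ n) y) ↔ Γ.Adj x y := by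
    intro n
    induction n with
    | zero => simp
    | succ n ih =>
      intro x y
      rw [pow_succ, Equiv.Perm.mul_apply, Equiv.Perm.mul_apply, ih]
      exact e.map_adj_iff
  have ho : orderOf g = p := by rw [hc.orderOf, hs]
  obtain ⟨v0, hv0, -⟩ := id hc
  let ψ : ZMod p → V := fun i => (g ^ i.val) v0
  have hcast : ∀ n : ℕ, (g ^ n) v0 = ψ (n : ZMod p) := by
    intro n
    simp only [ψ, ZMod.val_natCast]
    rw [← ho, pow_mod_orderOf]
  have hshift : ∀ c i, (g ^ c.val) (ψ i) = ψ (i + c) := by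
    intro c i
    have : (g ^ c.val) (ψ i) = (g ^ (c.val + i.val)) v0 := by
      rw [pow_add, Equiv.Perm.mul_apply]
    rw [this, hcast]
    congr 1
    push_cast
    rw [ZMod.natCast_zmod_val, ZMod.natCast_zmod_val, add_comm]
  have hrange : ∀ x, x ∈ g.support → x ∈ Set.range ψ := by
    intro x hx
    obtain ⟨n, hn⟩ := hc.exists_pow_eq hv0 (Equiv.Perm.mem_support.1 hx)
    exact ⟨n, by rw [← hcast, hn]⟩
  have hinj : Function.Injective ψ := by
    have h1 : g.support ⊆ Finset.univ.image ψ := by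
      intro x hx
      obtain ⟨i, hi⟩ := hrange x hx
      exact Finset.mem_image.2 ⟨i, Finset.mem_univ _, hi⟩
    have h2 := Finset.card_le_card h1
    rw [hs] at h2
    have h3 : (Finset.univ.image ψ).card = (Finset.univ : Finset (ZMod p)).card := by
      refine le_antisymm Finset.card_image_le ?_
      rw [Finset.card_univ, ZMod.card]; exact h2
    have := Finset.card_image_iff.1 h3
    rwa [Finset.coe_univ, Set.injOn_univ] at this
  refine ⟨ψ, hinj, fun c i j => ?_, fun x hx i j hij => ?_⟩
  · rw [← hshift c i, ← hshift c j, hadj]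
  · have hgx : g x = x := by
      by_contra h
      exact hx (hrange x (Equiv.Perm.mem_support.2 h))
    have hgn : ∀ n : ℕ, (g ^ n) x = x := fun n => by
      rw [Equiv.Perm.pow_apply_eq_self_of_apply_eq_self hgx]
    have := (hadj (j - i).val x (ψ i)).2 hij
    rw [hgn, hshift] at this
    simpa using this

/-- Recognition of a lexicographic product. -/
theorem exists_lex {V β : Type} [Fintype V] (Γ : SimpleGraph V)
    (hvt : IsVertexTransitive Γ) (r : Setoid V)
    (hinv : ∀ (e : Γ ≃g Γ) u v, r u v → r (e u) (e v))
    (hunif : ∀ u v w, r u v → ¬ r u w → Γ.Adj u w → Γ.Adj v w)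
    (Sg : SimpleGraph β) (v0 : V) (φ : β → V) (hφi : Function.Injective φ)
    (hφ : ∀ v, r v0 v ↔ v ∈ Set.range φ) (hadj : ∀ x y, Γ.Adj (φ x) (φ y) ↔ Sg.Adj x y) :
    ∃ (k : ℕ) (Θ : SimpleGraph (Fin k)), IsVertexTransitive Θ ∧ Nonempty (Γ ≃g lexProd Θ Sg) := by
  classical
  have hinv' : ∀ (e : Γ ≃g Γ) u v, r (e u) (e v) → r u v := by
    intro e u v h
    simpa using hinv e.symm _ _ h
  let ι := (Fintype.equivFin (Quotient r)).symm
  let rep : Fin (Fintype.card (Quotient r)) → V := fun i => (ι i).out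
  have hrep : ∀ i j, r (rep i) (rep j) → i = j := by
    intro i j h
    exact ι.injective (Quotient.out_equiv_out.1 h)
  have hcov : ∀ v, ∃ i, r (rep i) v := by
    intro v
    refine ⟨ι.symm ⟦v⟧, ?_⟩
    simp only [rep, Equiv.apply_symm_apply]
    exact Quotient.mk_out v
  have hunif' : ∀ u v u' v', r u u' → r v v' → ¬ r u v → (Γ.Adj u v ↔ Γ.Adj u' v') := by
    have key : ∀ u v u' v', r u u' → r v v' → ¬ r u v → Γ.Adj u v → Γ.Adj u' v' := by
      intro u v u' v' h1 h2 h3 h4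
      have h5 := hunif u u' v h1 h3 h4
      exact (hunif v v' u' h2 (fun h => h3 (r.trans h1 (r.symm h))) h5.symm).symm
    intro u v u' v' h1 h2 h3
    exact ⟨key _ _ _ _ h1 h2 h3, key _ _ _ _ (r.symm h1) (r.symm h2)
      (fun h => h3 (r.trans h1 (r.trans h (r.symm h2))))⟩
  choose e he using fun i => hvt v0 (rep i)
  let Θ : SimpleGraph (Fin (Fintype.card (Quotient r))) := Γ.comap rep
  refine ⟨_, Θ, ?_, ?_⟩
  · intro i j
    obtain ⟨f, hf⟩ := hvt (rep i) (rep j)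
    choose τ hτ using fun i => hcov (f (rep i))
    have hτi : Function.Injective τ := by
      intro a b hab
      apply hrep
      apply hinv' f
      exact r.trans (r.symm (hτ a)) (hab ▸ hτ b)
    have hτb : Function.Bijective τ := Finite.injective_iff_bijective.1 hτi
    refine ⟨⟨Equiv.ofBijective τ hτb, ?_⟩, ?_⟩
    · intro a b
      simp only [Equiv.ofBijective_apply, Θ, SimpleGraph.comap_adj]
      by_cases hab : a = b
      · subst hab; simp
      · rw [hunif' _ _ _ _ (hτ a) (hτ b) (fun h => hab (hτi (hrep _ _ h)))]
        exact f.map_adj_iff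
    · change τ i = j
      apply hrep
      rw [← hf]; exact hτ i
  · have hr : ∀ b i, r (rep i) (e i (φ b)) := by
      intro b i
      rw [← he i]
      exact hinv _ _ _ ((hφ _).2 ⟨b, rfl⟩)
    let F : β × Fin (Fintype.card (Quotient r)) → V := fun x => e x.2 (φ x.1)
    have hF : Function.Bijective F := by
      constructor
      · rintro ⟨b, i⟩ ⟨b', i'⟩ h
        simp only [F] at h
        have : i = i' := hrep _ _ (r.trans (hr b i) (h ▸ r.symm (hr b' i')))
        subst this
        rw [hφi ((e i).injective h)]
      · intro v
        obtain ⟨i, hi⟩ := hcov v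
        obtain ⟨w, rfl⟩ := (e i).surjective v
        rw [← he i] at hi
        obtain ⟨b, rfl⟩ := (hφ _).1 (hinv' _ _ _ hi)
        exact ⟨(b, i), rfl⟩
    refine ⟨SimpleGraph.Iso.symm ⟨Equiv.ofBijective F hF, ?_⟩⟩
    rintro ⟨b, i⟩ ⟨b', i'⟩
    simp only [Equiv.ofBijective_apply, F, lexProd, SimpleGraph.fromRel_adj, Θ,
      SimpleGraph.comap_adj]
    by_cases hii : i = i'
    · subst hii
      rw [(e i).map_adj_iff, hadj]
      constructor
      · intro h
        exact ⟨fun hh => h.ne (congrArg Prod.fst hh), Or.inl (Or.inr ⟨rfl, h⟩)⟩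
      · rintro ⟨-, (h | h) | (h | h)⟩
        · exact absurd rfl h.ne
        · exact h.2
        · exact absurd rfl h.ne
        · exact h.2.symm
    · rw [← hunif' _ _ _ _ (hr b i) (hr b' i') (fun h => hii (hrep _ _ h))]
      constructor
      · intro h
        exact ⟨fun hh => hii (congrArg Prod.snd hh), Or.inl (Or.inl h)⟩
      · rintro ⟨-, (h | h) | (h | h)⟩
        · exact h
        · exact absurd h.1 hii
        · exact h.symm
        · exact absurd h.1.symm hii

/-- Affinity of automorphisms of circulants of prime order. -/
theorem circulant_aut_affine {p : ℕ} [Fact p.Prime] (Sp : SimpleGraph (ZMod p))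
    (hc : ∀ c i j, Sp.Adj i j ↔ Sp.Adj (i + c) (j + c)) (hb : Sp ≠ ⊥) (ht : Sp ≠ ⊤)
    (σ : ZMod p → ZMod p) (hinj : Function.Injective σ)
    (hσ : ∀ i j, Sp.Adj (σ i) (σ j) ↔ Sp.Adj i j) : ∃ a b, ∀ x, σ x = a * x + b := by
  classical
  have hp : p.Prime := Fact.out
  have main : ∀ (G : SimpleGraph (ZMod p)), (∀ c i j, G.Adj i j ↔ G.Adj (i + c) (j + c)) →
      G ≠ ⊥ → (∀ i j, G.Adj (σ i) (σ j) ↔ G.Adj i j) →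
      2 * (Finset.univ.filter (fun u => G.Adj 0 u)).card ≤ p - 1 →
      ∃ a b, ∀ x, σ x = a * x + b := by
    intro G hc hb hσ hcard
    refine affine_of_preserves (Finset.univ.filter (fun u => G.Adj 0 u)) (by simp) ?_ hcard σ hinj ?_
    · obtain ⟨i, j, hij⟩ := SimpleGraph.ne_bot_iff_exists_adj.1 hb
      refine ⟨j - i, by simpa [sub_eq_add_neg] using (hc (-i) i j).1 hij⟩
    · intro x u hu
      simp only [Finset.mem_filter, Finset.mem_univ, true_and] at hu ⊢
      rw [hc (σ x)]
      simp only [zero_add, sub_add_cancel]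
      rw [hσ]
      have := (hc x 0 u).1 hu
      rwa [zero_add, add_comm u x] at this
  have hcc : ∀ c i j, Spᶜ.Adj i j ↔ Spᶜ.Adj (i + c) (j + c) := by
    intro c i j
    rw [SimpleGraph.compl_adj, SimpleGraph.compl_adj, ← hc c i j]; simp
  have hsum : (Finset.univ.filter (fun u => Sp.Adj 0 u)).card +
      (Finset.univ.filter (fun u => Spᶜ.Adj 0 u)).card ≤ p - 1 := by
    rw [← Finset.card_union_of_disjoint]
    · have : (Finset.univ.filter (fun u => Sp.Adj 0 u)) ∪ (Finset.univ.filter (fun u => Spᶜ.Adj 0 u))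
          ⊆ Finset.univ.erase 0 := by
        intro u hu
        simp only [Finset.mem_union, Finset.mem_filter, Finset.mem_univ, true_and,
          SimpleGraph.compl_adj] at hu
        simp only [Finset.mem_erase, Finset.mem_univ, and_true]
        rintro rfl
        simp at hu
      have := Finset.card_le_card this
      rwa [Finset.card_erase_of_mem (Finset.mem_univ _), Finset.card_univ, ZMod.card] at this
    · rw [Finset.disjoint_filter]
      intro u _ h1 h2
      exact (SimpleGraph.compl_adj _ _ _ |>.1 h2).2 h1
  by_cases hle : 2 * (Finset.univ.filter (fun u => Sp.Adj 0 u)).card ≤ p - 1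
  · exact main Sp hc hb hσ hle
  · have hle' : 2 * (Finset.univ.filter (fun u => Spᶜ.Adj 0 u)).card ≤ p - 1 := by omega
    refine main Spᶜ hcc ?_ ?_ (by convert hle')
    · intro h; apply ht; rw [← compl_compl Sp, h, compl_bot]
    · intro i j
      rw [SimpleGraph.compl_adj, SimpleGraph.compl_adj, hσ, hinj.ne_iff]

theorem TwinRel.trans' {V : Type*} {Γ : SimpleGraph V} {u v w : V} (h1 : TwinRel Γ u v)
    (h2 : TwinRel Γ v w) : TwinRel Γ u w := by
  intro x hxu hxw
  by_cases hxv : x = v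
  · subst hxv
    by_cases huw : u = w
    · subst huw; rfl
    · have a := h2 u hxu.symm huw
      have b := h1 w (Ne.symm huw) hxw.symm
      rw [Γ.adj_comm u x, a, Γ.adj_comm w u, b, Γ.adj_comm]
  · exact (h1 x hxu hxv).trans (h2 x hxv hxw)

/-- The twin relation. -/
def twinSetoid {V : Type*} (Γ : SimpleGraph V) : Setoid V where
  r := TwinRel Γ
  iseqv := ⟨fun _ _ _ _ => Iff.rfl, fun h w h1 h2 => (h w h2 h1).symm, fun h1 h2 => h1.trans' h2⟩

theorem motion_eq_of {V : Type*} [Fintype V] [DecidableEq V] (Γ : SimpleGraph V) (n : ℕ)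
    (hlow : ∀ e : Γ ≃g Γ, (e.toEquiv : Equiv.Perm V) ≠ 1 →
      n ≤ (Equiv.Perm.support (e.toEquiv : Equiv.Perm V)).card)
    (hup : ∃ e : Γ ≃g Γ, (e.toEquiv : Equiv.Perm V) ≠ 1 ∧
      (Equiv.Perm.support (e.toEquiv : Equiv.Perm V)).card ≤ n) : motion Γ = n := by
  obtain ⟨e, he, hle⟩ := hup
  have hmem : (Equiv.Perm.support (e.toEquiv : Equiv.Perm V)).card ∈
      {n | ∃ e : Γ ≃g Γ, (e.toEquiv : Equiv.Perm V) ≠ 1 ∧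
        (Equiv.Perm.support (e.toEquiv : Equiv.Perm V)).card = n} := ⟨e, he, rfl⟩
  refine le_antisymm (le_trans (Nat.sInf_le hmem) hle) ?_
  refine le_csInf ⟨_, e, he, rfl⟩ ?_
  rintro _ ⟨f, hf, rfl⟩
  exact hlow f hf

theorem case_twin {V : Type} [Fintype V] [DecidableEq V] (Γ : SimpleGraph V)
    (hvt : IsVertexTransitive Γ) (u v : V) (huv : u ≠ v) (ht : TwinRel Γ u v) :
    motion Γ = 2 ∧
      ∃ (m k : ℕ) (Θ : SimpleGraph (Fin k)), 2 ≤ m ∧ IsVertexTransitive Θ ∧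
        (Nonempty (Γ ≃g lexProd Θ (⊤ : SimpleGraph (Fin m))) ∨
         Nonempty (Γ ≃g lexProd Θ (⊥ : SimpleGraph (Fin m)))) := by
  classical
  constructor
  · refine motion_eq_of Γ 2 (fun e he => Equiv.Perm.two_le_card_support_of_ne_one he) ?_
    refine ⟨⟨Equiv.swap u v, ?_⟩, ?_, ?_⟩
    · intro a b
      have hne := huv.symm
      have key : ∀ w, w ≠ u → w ≠ v → (Γ.Adj w u ↔ Γ.Adj w v) := fun w h1 h2 => by
        rw [Γ.adj_comm w u, Γ.adj_comm w v]; exact ht w h1 h2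
      by_cases ha : a = u
      · subst ha
        by_cases hb : b = a
        · subst hb; simp
        · by_cases hb' : b = v
          · subst hb'; simp [Γ.adj_comm]
          · rw [Equiv.swap_apply_left, Equiv.swap_apply_of_ne_of_ne hb hb']
            exact (ht b hb hb').symm
      · by_cases ha' : a = v
        · subst ha'
          by_cases hb : b = u
          · subst hb; simp [Γ.adj_comm]
          · by_cases hb' : b = a
            · subst hb'; simp
            · rw [Equiv.swap_apply_right, Equiv.swap_apply_of_ne_of_ne hb hb']
              exact (ht b hb hb')
        · rw [Equiv.swap_apply_of_ne_of_ne ha ha']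
          by_cases hb : b = u
          · subst hb; rw [Equiv.swap_apply_left]; exact (key a ha ha').symm
          · by_cases hb' : b = v
            · subst hb'; rw [Equiv.swap_apply_right]; exact (key a ha ha')
            · rw [Equiv.swap_apply_of_ne_of_ne hb hb']
    · simpa [Equiv.swap_eq_one_iff] using huv
    · exact (Equiv.Perm.card_support_swap huv).le
  · let r := twinSetoid Γ
    let T := {w // TwinRel Γ u w}
    let φ0 : Fin (Fintype.card T) ≃ T := (Fintype.equivFin T).symm
    let φ : Fin (Fintype.card T) → V := fun i => (φ0 i).1
    have hφi : Function.Injective φ := Subtype.val_injective.comp φ0.injective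
    have hφt : ∀ i, TwinRel Γ u (φ i) := fun i => (φ0 i).2
    have hφ : ∀ w, r u w ↔ w ∈ Set.range φ := by
      intro w
      constructor
      · intro h
        exact ⟨φ0.symm ⟨w, h⟩, by simp [φ]⟩
      · rintro ⟨i, rfl⟩; exact hφt i
    have hinv : ∀ (e : Γ ≃g Γ) u v, r u v → r (e u) (e v) := by
      intro e a b hab w h1 h2
      obtain ⟨x, rfl⟩ := e.surjective w
      rw [e.map_adj_iff, e.map_adj_iff]
      exact hab x (fun h => h1 (h ▸ rfl)) (fun h => h2 (h ▸ rfl))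
    have hunif : ∀ u v w, r u v → ¬ r u w → Γ.Adj u w → Γ.Adj v w := by
      intro a b w hab haw h
      refine (hab w ?_ ?_).1 h
      · rintro rfl; exact haw (r.refl _)
      · rintro rfl; exact haw hab
    have hm : 2 ≤ Fintype.card T := by
      have : Fintype.card Bool ≤ Fintype.card T := by
        refine Fintype.card_le_of_injective
          (fun b : Bool => if b then (⟨u, r.refl u⟩ : T) else ⟨v, ht⟩) ?_
        intro a b hab
        have hab' := congrArg Subtype.val hab
        cases a <;> cases b
        · rfl
        · exact absurd hab' huv.symm
        · exact absurd hab' huv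
        · rfl
      simpa using this
    have hcl : ∀ x y, TwinRel Γ u x → TwinRel Γ u y → x ≠ y → (Γ.Adj x y ↔ Γ.Adj u v) := by
      have h1 : ∀ y, TwinRel Γ u y → u ≠ y → (Γ.Adj u y ↔ Γ.Adj u v) := by
        intro y hy huy
        by_cases hyv : y = v
        · rw [hyv]
        · have h := (r.trans (r.symm hy) ht : TwinRel Γ y v) u huy huv
          rw [Γ.adj_comm u y, Γ.adj_comm u v, h]
      intro x y hx hy hxy
      by_cases hyu : y = u
      · subst hyu
        rw [Γ.adj_comm]; exact h1 x hx hxy.symm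
      · have := hx y hyu hxy.symm
        rw [← this]; exact h1 y hy (Ne.symm hyu)
    by_cases hA : Γ.Adj u v
    · obtain ⟨k, Θ, h1, h2⟩ := exists_lex Γ hvt r hinv hunif
        (⊤ : SimpleGraph (Fin (Fintype.card T))) u φ hφi hφ (by
          intro x y
          rw [SimpleGraph.top_adj]
          refine ⟨fun h hxy => h.ne (hxy ▸ rfl), fun h => ?_⟩
          exact (hcl _ _ (hφt x) (hφt y) (hφi.ne h)).2 hA)
      exact ⟨_, k, Θ, hm, h1, Or.inl h2⟩
    · obtain ⟨k, Θ, h1, h2⟩ := exists_lex Γ hvt r hinv hunif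
        (⊥ : SimpleGraph (Fin (Fintype.card T))) u φ hφi hφ (by
          intro x y
          rw [SimpleGraph.bot_adj, iff_false]
          intro h
          exact hA ((hcl _ _ (hφt x) (hφt y) h.ne).1 h))
      exact ⟨_, k, Θ, hm, h1, Or.inr h2⟩

theorem iso_top_eq {α : Type*} {G : SimpleGraph α} (h : Nonempty (G ≃g (⊤ : SimpleGraph α))) :
    G = ⊤ := by
  obtain ⟨e⟩ := h
  ext a b
  rw [← e.map_adj_iff]; simp

theorem iso_bot_eq {α : Type*} {G : SimpleGraph α} (h : Nonempty (G ≃g (⊥ : SimpleGraph α))) :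
    G = ⊥ := by
  obtain ⟨e⟩ := h
  ext a b
  rw [← e.map_adj_iff]; simp

theorem lower_bound {V : Type} [Fintype V] [DecidableEq V] (Γ : SimpleGraph V)
    (hvt : IsVertexTransitive Γ) {p : ℕ} [Fact p.Prime] (ψ : ZMod p → V) (hψ : GoodParam Γ ψ)
    (hblk : ∀ e : Γ ≃g Γ, ∀ i, e (ψ i) ∈ Set.range ψ → ∀ j, e (ψ j) ∈ Set.range ψ)
    (hb : Γ.comap ψ ≠ ⊥) (ht : Γ.comap ψ ≠ ⊤) (e : Γ ≃g Γ)
    (he : (e.toEquiv : Equiv.Perm V) ≠ 1) :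
    p - 1 ≤ (Equiv.Perm.support (e.toEquiv : Equiv.Perm V)).card := by
  classical
  -- first, automorphisms moving `ψ 0`
  have main : ∀ f : Γ ≃g Γ, f (ψ 0) ≠ ψ 0 →
      p - 1 ≤ (Equiv.Perm.support (f.toEquiv : Equiv.Perm V)).card := by
    intro f hf
    obtain ⟨i0, hi0⟩ : ∃ i0, ∀ i, i ≠ i0 → f (ψ i) ≠ ψ i := by
      by_cases h0 : f (ψ 0) ∈ Set.range ψ
      · choose σ hσ using hblk f 0 h0
        have hσi : Function.Injective σ := by
          intro a b hab
          apply hψ.1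
          apply f.injective
          rw [← hσ a, ← hσ b, hab]
        obtain ⟨a, b, hab⟩ := circulant_aut_affine (Γ.comap ψ)
          (fun c i j => by simpa using hψ.2.1 c i j) hb ht σ hσi (by
            intro i j
            simp only [SimpleGraph.comap_adj, hσ]
            exact f.map_adj_iff)
        have hb0 : b ≠ 0 := by
          rintro rfl
          apply hf
          rw [← hσ 0, hab 0]; simp
        -- fixed points satisfy (1 - a) x = b
        refine ⟨b / (1 - a), fun i hi hfi => hi ?_⟩
        have h1 : σ i = i := hψ.1 (by rw [hσ, hfi])
        rw [hab] at h1
        have h2 : (1 - a) * i = b := by linear_combination -h1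
        have h3 : 1 - a ≠ 0 := by
          intro h; rw [h, zero_mul] at h2; exact hb0 h2.symm
        rw [← h2]; field_simp
      · refine ⟨0, fun i _ h => h0 (hblk f i ?_ 0)⟩
        rw [h]; exact ⟨i, rfl⟩
    have hsub : (Finset.univ.erase i0).image ψ ⊆
        Equiv.Perm.support (f.toEquiv : Equiv.Perm V) := by
      intro x hx
      obtain ⟨i, hi, rfl⟩ := Finset.mem_image.1 hx
      exact Equiv.Perm.mem_support.2 (hi0 i (Finset.mem_erase.1 hi).1)
    have := Finset.card_le_card hsub
    rwa [Finset.card_image_of_injective _ hψ.1, Finset.card_erase_of_mem (Finset.mem_univ _),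
      Finset.card_univ, ZMod.card] at this
  obtain ⟨v, hv⟩ : ∃ v, e v ≠ v := by
    by_contra hcon
    push Not at hcon
    exact he (Equiv.ext hcon)
  obtain ⟨f, hf⟩ := hvt (ψ 0) v
  have h1 := main ((f.trans e).trans f.symm) (by
    intro h
    apply hv
    have h2 : f.symm (e (f (ψ 0))) = ψ 0 := h
    rw [hf] at h2
    have h3 := congrArg f h2
    rw [RelIso.apply_symm_apply, hf] at h3
    exact h3)
  refine h1.trans ?_
  refine Finset.card_le_card_of_injOn f ?_ f.injective.injOn
  intro x hx
  simp only [Finset.mem_coe, Equiv.Perm.mem_support] at hx ⊢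
  intro h
  apply hx
  change f.symm (e (f x)) = x
  have h' : e (f x) = f x := h
  rw [h', RelIso.symm_apply_apply]

theorem upper_bound {V : Type} [Fintype V] [DecidableEq V] (Γ : SimpleGraph V)
    {p : ℕ} [Fact p.Prime] (hp3 : 3 ≤ p) (ψ : ZMod p → V) (hψ : GoodParam Γ ψ) :
    ∃ e : Γ ≃g Γ, (e.toEquiv : Equiv.Perm V) ≠ 1 ∧
      (Equiv.Perm.support (e.toEquiv : Equiv.Perm V)).card ≤ p - 1 := by
  classical
  let τ : Equiv.Perm V := (Equiv.neg (ZMod p)).viaFintypeEmbedding ⟨ψ, hψ.1⟩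
  have h1 : ∀ i, τ (ψ i) = ψ (-i) := fun i =>
    Equiv.Perm.viaFintypeEmbedding_apply_image (Equiv.neg (ZMod p)) ⟨ψ, hψ.1⟩ i
  have h2 : ∀ x, x ∉ Set.range ψ → τ x = x := fun x hx =>
    Equiv.Perm.viaFintypeEmbedding_apply_notMem_range (Equiv.neg (ZMod p)) ⟨ψ, hψ.1⟩ hx
  have hadj : ∀ {a b}, Γ.Adj (τ a) (τ b) ↔ Γ.Adj a b := by
    intro a b
    by_cases ha : a ∈ Set.range ψ
    · obtain ⟨i, rfl⟩ := ha
      by_cases hb : b ∈ Set.range ψ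
      · obtain ⟨j, rfl⟩ := hb
        rw [h1, h1, hψ.2.1 (i + j), Γ.adj_comm (ψ i)]
        simp
      · rw [h1, h2 b hb, Γ.adj_comm, Γ.adj_comm (ψ i)]
        exact ⟨hψ.2.2 b hb _ _, hψ.2.2 b hb _ _⟩
    · by_cases hb : b ∈ Set.range ψ
      · obtain ⟨j, rfl⟩ := hb
        rw [h1, h2 a ha]
        exact ⟨hψ.2.2 a ha _ _, hψ.2.2 a ha _ _⟩
      · rw [h2 a ha, h2 b hb]
  refine ⟨⟨τ, hadj⟩, ?_, ?_⟩
  · intro h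
    have h3 : τ (ψ 1) = ψ 1 := by
      change τ = 1 at h
      rw [h]; rfl
    rw [h1] at h3
    have h4 : (-1 : ZMod p) = 1 := hψ.1 h3
    have : Fact (2 < p) := ⟨hp3⟩
    exact ZMod.neg_one_ne_one h4
  · have hsub : Equiv.Perm.support τ ⊆ (Finset.univ.erase 0).image ψ := by
      intro x hx
      rw [Equiv.Perm.mem_support] at hx
      by_cases hxr : x ∈ Set.range ψ
      · obtain ⟨i, rfl⟩ := hxr
        refine Finset.mem_image_of_mem _ (Finset.mem_erase.2 ⟨?_, Finset.mem_univ _⟩)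
        rintro rfl
        apply hx; rw [h1, neg_zero]
      · exact absurd (h2 x hxr) hx
    have := Finset.card_le_card hsub
    rwa [Finset.card_image_of_injective _ hψ.1, Finset.card_erase_of_mem (Finset.mem_univ _),
      Finset.card_univ, ZMod.card] at this

theorem case_noTwin {V : Type} [Fintype V] [DecidableEq V] (Γ : SimpleGraph V)
    (hvt : IsVertexTransitive Γ) {p : ℕ} [Fact p.Prime] (hp3 : 3 ≤ p) (ψ : ZMod p → V)
    (hψ : GoodParam Γ ψ) (hno : ¬ ∃ u v, u ≠ v ∧ TwinRel Γ u v) :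
    ∃ (k : ℕ) (Θ : SimpleGraph (Fin k)) (Sp : SimpleGraph (ZMod p)),
      IsVertexTransitive Θ ∧ IsCirculant Sp ∧ Nonempty (Γ ≃g lexProd Θ Sp) ∧
      ((Nonempty (Sp ≃g (⊤ : SimpleGraph (ZMod p))) ∨
        Nonempty (Sp ≃g (⊥ : SimpleGraph (ZMod p)))) → motion Γ = 2) ∧
      (¬(Nonempty (Sp ≃g (⊤ : SimpleGraph (ZMod p))) ∨
         Nonempty (Sp ≃g (⊥ : SimpleGraph (ZMod p)))) → motion Γ = p - 1) := by
  classical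
  -- two translates that meet are equal
  have hsub : ∀ ψ χ : ZMod p → V, GoodParam Γ ψ → GoodParam Γ χ → ∀ i j, ψ i = χ j →
      Set.range ψ = Set.range χ := by
    intro ψ χ hψ hχ i j hij
    have hcardψ : (Set.range ψ).ncard = p := by
      rw [← Set.image_univ, Set.ncard_image_of_injective _ hψ.1, Set.ncard_univ, Nat.card_zmod]
    have hcardχ : (Set.range χ).ncard = p := by
      rw [← Set.image_univ, Set.ncard_image_of_injective _ hχ.1, Set.ncard_univ, Nat.card_zmod]
    by_contra hne
    have h1 : ¬ Set.range ψ ⊆ Set.range χ := fun h =>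
      hne (Set.eq_of_subset_of_ncard_le h (by omega))
    have h2 : ¬ Set.range χ ⊆ Set.range ψ := fun h =>
      hne (Set.eq_of_subset_of_ncard_le h (by omega)).symm
    obtain ⟨_, ⟨i1, rfl⟩, h1⟩ := Set.not_subset.1 h1
    obtain ⟨_, ⟨j1, rfl⟩, h2⟩ := Set.not_subset.1 h2
    exact hno (overlap_twin hψ hχ hij h1 h2)
  have hb : Γ.comap ψ ≠ ⊥ := by
    intro h
    refine hno (const_twin hψ False fun i j _ => ?_)
    rw [← SimpleGraph.comap_adj, h]; simp
  have ht : Γ.comap ψ ≠ ⊤ := by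
    intro h
    refine hno (const_twin hψ True fun i j hij => ?_)
    rw [← SimpleGraph.comap_adj, h]; simpa using hij
  have hblk : ∀ e : Γ ≃g Γ, ∀ i, e (ψ i) ∈ Set.range ψ → ∀ j, e (ψ j) ∈ Set.range ψ := by
    rintro e i ⟨k, hk⟩ j
    rw [hsub ψ (fun i => e (ψ i)) hψ (hψ.map e) k i hk]
    exact ⟨j, rfl⟩
  let r : Setoid V :=
    { r := fun u v => ∀ e : Γ ≃g Γ, e u ∈ Set.range ψ ↔ e v ∈ Set.range ψ
      iseqv := ⟨fun _ _ => Iff.rfl, fun h e => (h e).symm, fun h1 h2 e => (h1 e).trans (h2 e)⟩ }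
  have hinv : ∀ (e : Γ ≃g Γ) u v, r u v → r (e u) (e v) := fun e u v h f => h (e.trans f)
  have hφ : ∀ v, r (ψ 0) v ↔ v ∈ Set.range ψ := by
    intro v
    constructor
    · intro h
      exact (h (RelIso.refl _)).1 ⟨0, rfl⟩
    · rintro ⟨j, rfl⟩ e
      exact ⟨fun h => hblk e 0 h j, fun h => hblk e j h 0⟩
  have hunif : ∀ u v w, r u v → ¬ r u w → Γ.Adj u w → Γ.Adj v w := by
    intro u v w huv huw hadj
    obtain ⟨f, hf⟩ := hvt u (ψ 0)
    have h1 : r (ψ 0) (f v) := hf ▸ hinv f u v huv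
    have h2 : ¬ r (ψ 0) (f w) := by
      intro h
      apply huw
      rw [← hf] at h
      simpa using hinv f.symm _ _ h
    rw [hφ] at h1 h2
    obtain ⟨i, hi⟩ := h1
    rw [← f.map_adj_iff, hf] at hadj
    rw [← f.map_adj_iff, ← hi]
    exact (hψ.2.2 _ h2 0 i hadj.symm).symm
  obtain ⟨k, Θ, hΘ, hiso⟩ := exists_lex Γ hvt r hinv hunif (Γ.comap ψ) (ψ 0) ψ hψ.1 hφ
    (fun x y => by rw [SimpleGraph.comap_adj])
  refine ⟨k, Θ, Γ.comap ψ, hΘ, fun c x y => by simpa using hψ.2.1 c x y, hiso, ?_, fun _ => ?_⟩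
  · rintro (h | h)
    · exact absurd (iso_top_eq h) ht
    · exact absurd (iso_bot_eq h) hb
  · exact motion_eq_of Γ (p - 1) (lower_bound Γ hvt ψ hψ hblk hb ht) (upper_bound Γ hp3 ψ hψ)

/-- If the automorphism group of a finite vertex-transitive graph
`Γ` contains a `p`-cycle for a prime `p ≥ 3`, then either `μ(Γ) = 2` and `Γ` is a
lexicographic product `Θ[K_m]` or `Θ[m K₁]`, or `Γ ≅ Θ[Σ_p]` for a circulant graph
`Σ_p` on `p` vertices, in which case `μ(Γ) = 2` if `Σ_p ≅ K_p` or `Σ_p ≅ p K₁` and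
`μ(Γ) = p - 1` otherwise. -/
theorem statement_1 {V : Type} [Fintype V] [DecidableEq V] (Γ : SimpleGraph V)
    (hvt : IsVertexTransitive Γ) (p : ℕ) [NeZero p] (hp : p.Prime) (hp3 : 3 ≤ p)
    (hcyc : ∃ e : Γ ≃g Γ, Equiv.Perm.IsCycle (e.toEquiv : Equiv.Perm V) ∧
      (Equiv.Perm.support (e.toEquiv : Equiv.Perm V)).card = p) :
    (motion Γ = 2 ∧
      ∃ (m k : ℕ) (Θ : SimpleGraph (Fin k)), 2 ≤ m ∧ IsVertexTransitive Θ ∧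
        (Nonempty (Γ ≃g lexProd Θ (⊤ : SimpleGraph (Fin m))) ∨
         Nonempty (Γ ≃g lexProd Θ (⊥ : SimpleGraph (Fin m))))) ∨
    (∃ (k : ℕ) (Θ : SimpleGraph (Fin k)) (Sp : SimpleGraph (ZMod p)),
      IsVertexTransitive Θ ∧ IsCirculant Sp ∧ Nonempty (Γ ≃g lexProd Θ Sp) ∧
      ((Nonempty (Sp ≃g (⊤ : SimpleGraph (ZMod p))) ∨
        Nonempty (Sp ≃g (⊥ : SimpleGraph (ZMod p)))) → motion Γ = 2) ∧
      (¬(Nonempty (Sp ≃g (⊤ : SimpleGraph (ZMod p))) ∨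
         Nonempty (Sp ≃g (⊥ : SimpleGraph (ZMod p)))) → motion Γ = p - 1)) := by
  haveI : Fact p.Prime := ⟨hp⟩
  obtain ⟨e, hc, hs⟩ := hcyc
  obtain ⟨ψ, hψ⟩ := goodParam_of_cycle e hc hs
  by_cases htw : ∃ u v, u ≠ v ∧ TwinRel Γ u v
  · obtain ⟨u, v, huv, ht⟩ := htw
    exact Or.inl (case_twin Γ hvt u v huv ht)
  · exact Or.inr (case_noTwin Γ hvt hp3 ψ hψ htw)
end

section
/- Let G be a transitive permutation group on a finite set Ω with |Ω| = n, and suppose that for some prime p the group G contains a p-cycle. Then there exist m, k ∈ ℕ with p ≤ m and n = mk, and transitive permutation groups X ≤ Y of degree m such that X is primitive and contains a p-cycle, and, up to permutation isomorphism, X^k ≤ G ≤ Y ≀ Sym(k), with X^k contained in the base group. Moreover, if p < m, then X is 2-transitive. -/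
open Equiv Pointwise

/-- A permutation group is transitive. -/
def IsTransitivePermGroup {Ω : Type*} (G : Subgroup (Equiv.Perm Ω)) : Prop :=
  ∀ a b : Ω, ∃ g ∈ G, g a = b

/-- A permutation group is 2-transitive. -/
def Is2TransitivePermGroup {Ω : Type*} (G : Subgroup (Equiv.Perm Ω)) : Prop :=
  ∀ a b c d : Ω, a ≠ b → c ≠ d → ∃ g ∈ G, g a = c ∧ g b = d

/-- The element of the imprimitive wreath product determined by a function
`g : ι → Perm Δ` and a permutation `h` of the index set, acting on `Δ × ι` by
`(δ, i) ↦ (g i δ, h i)`. -/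
def wreathPerm {Δ ι : Type*} (g : ι → Equiv.Perm Δ) (h : Equiv.Perm ι) :
    Equiv.Perm (Δ × ι) where
  toFun x := (g x.2 x.1, h x.2)
  invFun x := ((g (h⁻¹ x.2))⁻¹ x.1, h⁻¹ x.2)
  left_inv := by rintro ⟨d, i⟩; simp
  right_inv := by rintro ⟨d, i⟩; simp

/-- The imprimitive wreath product `Y ≀ H` of permutation groups, as a permutation
group on `Δ × ι`.  (The defining set is already a subgroup, so taking the
subgroup closure does not change it.) -/
def wreathProduct {Δ ι : Type*} (Y : Subgroup (Equiv.Perm Δ))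
    (H : Subgroup (Equiv.Perm ι)) : Subgroup (Equiv.Perm (Δ × ι)) :=
  Subgroup.closure {σ | ∃ (g : ι → Equiv.Perm Δ) (h : Equiv.Perm ι),
    (∀ i, g i ∈ Y) ∧ h ∈ H ∧ σ = wreathPerm g h}

/-- The copy `X^ι` of a power of `X` inside the base group of a wreath product,
as a permutation group on `Δ × ι`. -/
def basePower {Δ ι : Type*} (X : Subgroup (Equiv.Perm Δ)) :
    Subgroup (Equiv.Perm (Δ × ι)) :=
  Subgroup.closure {σ | ∃ g : ι → Equiv.Perm Δ, (∀ i, g i ∈ X) ∧ σ = wreathPerm g 1}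

/-- Transport of permutations along a bijection, as a group isomorphism. -/
def permMapEquiv {α β : Type*} (f : α ≃ β) : Equiv.Perm α ≃* Equiv.Perm β where
  toFun g := (f.symm.trans g).trans f
  invFun g := (f.trans g).trans f.symm
  left_inv g := by ext x; simp
  right_inv g := by ext x; simp
  map_mul' g₁ g₂ := by ext x; simp [Equiv.Perm.mul_apply]

/-- Transport of a permutation group along a bijection of the underlying sets.
`mapPermGroup f G` is the permutation group on `β` corresponding to `G` under the
relabelling `f`; thus `G` and `mapPermGroup f G` are permutation isomorphic. -/
def mapPermGroup {α β : Type*} (f : α ≃ β) (G : Subgroup (Equiv.Perm α)) :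
    Subgroup (Equiv.Perm β) :=
  Subgroup.map (permMapEquiv f).toMonoidHom G

/-- A partition of a set. -/
def IsPartition {Ω : Type*} (P : Set (Set Ω)) : Prop :=
  ∀ ω : Ω, ∃! B, B ∈ P ∧ ω ∈ B

/-- A block system for a permutation group: a `G`-invariant partition into sets of
size at least 2. -/
def IsBlockSystem {Ω : Type*} (G : Subgroup (Equiv.Perm Ω)) (P : Set (Set Ω)) : Prop :=
  IsPartition P ∧ (∀ B ∈ P, 2 ≤ B.ncard) ∧
    ∀ g ∈ G, ∀ B ∈ P, (g : Equiv.Perm Ω) '' B ∈ P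

/-- `P` is finer than `Q` (every block of `P` is contained in a block of `Q`). -/
def Finer {Ω : Type*} (P Q : Set (Set Ω)) : Prop := ∀ B ∈ P, ∃ C ∈ Q, B ⊆ C

/-- A system of minimal blocks: a block system such that the only block system finer
than it is itself. -/
def IsMinimalBlockSystem {Ω : Type*} (G : Subgroup (Equiv.Perm Ω))
    (P : Set (Set Ω)) : Prop :=
  IsBlockSystem G P ∧ ∀ Q, IsBlockSystem G Q → Finer Q P → Q = P

/-- A permutation group is primitive: it is transitive and preserves no partition of
the underlying set into at least two sets of size at least two. -/
def IsPrimitivePermGroup {Ω : Type*} (G : Subgroup (Equiv.Perm Ω)) : Prop :=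
  (∀ a b : Ω, ∃ g ∈ G, g a = b) ∧
    ¬ ∃ P : Set (Set Ω), IsBlockSystem G P ∧ 2 ≤ P.ncard

/-- The subgroup generated by the `p`-cycles in `G`. -/
def pcGen {Ω : Type*} [Fintype Ω] [DecidableEq Ω] (G : Subgroup (Equiv.Perm Ω)) (p : ℕ) :
    Subgroup (Equiv.Perm Ω) :=
  Subgroup.closure {g | g ∈ G ∧ Equiv.Perm.IsCycle g ∧ (Equiv.Perm.support g).card = p}

theorem pcGen_le {Ω : Type*} [Fintype Ω] [DecidableEq Ω] (G : Subgroup (Equiv.Perm Ω)) (p : ℕ) :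
    pcGen G p ≤ G := by
  rw [pcGen, Subgroup.closure_le]
  exact fun g hg => hg.1

theorem pcGen_conj {Ω : Type*} [Fintype Ω] [DecidableEq Ω] (G : Subgroup (Equiv.Perm Ω)) (p : ℕ)
    (g : Equiv.Perm Ω) (hg : g ∈ G) (x : Equiv.Perm Ω) (hx : x ∈ pcGen G p) :
    g * x * g⁻¹ ∈ pcGen G p := by
  have : pcGen G p ≤ (pcGen G p).comap (MulAut.conj g).toMonoidHom := by
    conv_lhs => rw [pcGen]
    rw [Subgroup.closure_le]
    rintro c ⟨h1, h2, h3⟩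
    apply Subgroup.subset_closure
    refine ⟨G.mul_mem (G.mul_mem hg h1) (G.inv_mem hg), h2.conj, ?_⟩
    simpa [Equiv.Perm.card_support_conj] using h3
  exact this hx

theorem block_eq {Ω : Type*} {P : Set (Set Ω)} (hP : IsPartition P) {B C : Set Ω}
    (hB : B ∈ P) (hC : C ∈ P) {x : Ω} (hxB : x ∈ B) (hxC : x ∈ C) : B = C :=
  (hP x).unique ⟨hB, hxB⟩ ⟨hC, hxC⟩

theorem cycle_fixes_block {Ω : Type*} [Fintype Ω] [DecidableEq Ω] {X : Subgroup (Equiv.Perm Ω)}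
    {p : ℕ} (hp : p.Prime) {P : Set (Set Ω)} (hP : IsBlockSystem X P) {c : Equiv.Perm Ω}
    (hc : c ∈ X) (hcyc : c.IsCycle) (hcard : c.support.card = p) {B : Set Ω} (hB : B ∈ P) :
    c '' B = B := by
  obtain ⟨hpart, h2, hinv⟩ := hP
  by_contra hne
  have hmov : ∀ b ∈ B, c b ≠ b := by
    intro b hb h
    apply hne
    exact block_eq hpart (hinv c hc B hB) hB (x := b) ⟨b, hb, h⟩ hb
  have h2B : 1 < B.ncard := h2 B hB
  rw [Set.one_lt_ncard] at h2B
  obtain ⟨a, ha, b, hb, hab⟩ := h2B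
  obtain ⟨i, hi⟩ := hcyc.sameCycle (hmov a ha) (hmov b hb)
  have hst : c ^ i ∈ MulAction.stabilizer (Equiv.Perm Ω) B := by
    change (c ^ i) '' B = B
    exact block_eq hpart (hinv _ (X.zpow_mem hc i) B hB) hB (x := b) ⟨a, ha, hi⟩ hb
  have hci : c ∈ Subgroup.zpowers (c ^ i) := by
    rw [mem_zpowers_zpow_iff, hcyc.orderOf, hcard]
    have hnd : ¬ (p : ℤ) ∣ i := by
      intro hd
      have : c ^ i = 1 := by
        rw [← orderOf_dvd_iff_zpow_eq_one, hcyc.orderOf, hcard]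
        exact hd
      rw [this] at hi
      exact hab hi
    rw [Int.gcd_comm]
    exact (Int.isCoprime_iff_gcd_eq_one.mp
      ((Nat.prime_iff_prime_int.mp hp).coprime_iff_not_dvd.mpr hnd))
  have : c ∈ MulAction.stabilizer (Equiv.Perm Ω) B :=
    (Subgroup.zpowers_le.mpr hst) hci
  exact hne this

theorem primitive_of_pcGen {Ω : Type*} [Fintype Ω] [DecidableEq Ω] {X : Subgroup (Equiv.Perm Ω)}
    {p : ℕ} (hp : p.Prime) (ht : IsTransitivePermGroup (pcGen X p)) :
    IsPrimitivePermGroup X := by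
  refine ⟨fun a b => ?_, ?_⟩
  · obtain ⟨g, hg, h⟩ := ht a b
    exact ⟨g, pcGen_le X p hg, h⟩
  · rintro ⟨P, hP, h2⟩
    have h2' : 1 < P.ncard := h2
    rw [Set.one_lt_ncard] at h2'
    obtain ⟨B, hB, C, hC, hBC⟩ := h2'
    have hnB : B.Nonempty := Set.nonempty_of_ncard_ne_zero (by have := hP.2.1 B hB; omega)
    have hnC : C.Nonempty := Set.nonempty_of_ncard_ne_zero (by have := hP.2.1 C hC; omega)
    obtain ⟨b, hb⟩ := hnB
    obtain ⟨d, hd⟩ := hnC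
    obtain ⟨g, hg, hgb⟩ := ht b d
    have hle : pcGen X p ≤ MulAction.stabilizer (Equiv.Perm Ω) B := by
      rw [pcGen, Subgroup.closure_le]
      rintro c ⟨h1, h2, h3⟩
      exact cycle_fixes_block hp hP h1 h2 h3 hB
    have hgB : g '' B = B := hle hg
    apply hBC
    refine block_eq hP.1 hB hC (x := d) ?_ hd
    rw [← hgB]
    exact ⟨b, hb, hgb⟩

theorem preprimitive_of {Ω : Type*} [Finite Ω] {X : Subgroup (Equiv.Perm Ω)}
    (h : IsPrimitivePermGroup X) : MulAction.IsPreprimitive X Ω := by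
  obtain ⟨ht, hno⟩ := h
  have hpre : MulAction.IsPretransitive X Ω := ⟨fun a b => by
    obtain ⟨g, hg, h⟩ := ht a b
    exact ⟨⟨g, hg⟩, h⟩⟩
  refine { hpre with isTrivialBlock_of_isBlock := ?_ }
  intro B hB
  by_contra hcon
  rw [MulAction.IsTrivialBlock, not_or] at hcon
  obtain ⟨hns, hnu⟩ := hcon
  have hnt : B.Nontrivial := Set.not_subsingleton_iff.mp hns
  apply hno
  have hsys := hB.isBlockSystem hnt.nonempty
  have hB2 : 2 ≤ B.ncard := by
    have := (Set.one_lt_ncard_iff_nontrivial (s := B)).mpr hnt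
    omega
  refine ⟨Set.range fun g : X => g • B, ⟨?_, ?_, ?_⟩, ?_⟩
  · intro ω
    obtain ⟨C, hC, hu⟩ := hsys.1.2 ω
    exact ⟨C, hC, hu⟩
  · rintro _ ⟨g, rfl⟩
    simpa [Set.ncard_smul_set] using hB2
  · rintro g hg _ ⟨g', rfl⟩
    refine ⟨⟨g, hg⟩ * g', ?_⟩
    simp only [mul_smul]
    rfl
  · have : ∃ d, d ∉ B := by
      by_contra hh
      push Not at hh
      exact hnu (Set.eq_univ_of_forall hh)
    obtain ⟨d, hd⟩ := this
    obtain ⟨b, hb⟩ := hnt.nonempty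
    obtain ⟨g, hg, hgb⟩ := ht b d
    have : 1 < (Set.range fun g : X => g • B).ncard := by
      rw [Set.one_lt_ncard]
      refine ⟨B, ⟨1, by simp⟩, (⟨g, hg⟩ : X) • B, ⟨_, rfl⟩, ?_⟩
      intro he
      apply hd
      rw [he]
      exact ⟨b, hb, hgb⟩
    exact this

theorem two_trans_of {Ω : Type*} [Fintype Ω] [DecidableEq Ω] {X : Subgroup (Equiv.Perm Ω)}
    {p : ℕ} (hp : p.Prime) (h : IsPrimitivePermGroup X) (c : Equiv.Perm Ω) (hc : c ∈ X)
    (hcyc : c.IsCycle) (hcard : c.support.card = p) (hlt : p < Fintype.card Ω) :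
    Is2TransitivePermGroup X := by
  have hX := preprimitive_of h
  have hs := Equiv.Perm.isPretransitive_of_isCycle_mem hcyc hc
  have h1 := hp.one_lt
  have hn : ((c.support : Set Ω)ᶜ).ncard = (Fintype.card Ω - p - 1) + 1 := by
    have := Set.ncard_add_ncard_compl (c.support : Set Ω)
    rw [Set.ncard_coe_finset, hcard, Nat.card_eq_fintype_card] at this
    omega
  have h2 := hX.is_two_pretransitive hn (by rw [Nat.card_eq_fintype_card]; omega) hs
  rw [MulAction.is_two_pretransitive_iff] at h2
  intro a b c d hab hcd
  obtain ⟨g, hg1, hg2⟩ := h2 hab hcd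
  exact ⟨g, g.2, hg1, hg2⟩

theorem exists_wreath {Δ ι : Type*} [Finite Δ] [Finite ι] [Nonempty Δ] (σ : Equiv.Perm (Δ × ι))
    (hσ : ∀ x y : Δ × ι, x.2 = y.2 ↔ (σ x).2 = (σ y).2) :
    ∃ (g : ι → Equiv.Perm Δ) (h : Equiv.Perm ι), σ = wreathPerm g h := by
  obtain ⟨d⟩ := ‹Nonempty Δ›
  let h : Equiv.Perm ι := Equiv.ofBijective (fun i => (σ (d, i)).2)
    (Finite.injective_iff_bijective.mp fun i j hij => (hσ (d, i) (d, j)).mpr hij)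
  let g : ι → Equiv.Perm Δ := fun i => Equiv.ofBijective (fun x => (σ (x, i)).1)
    (Finite.injective_iff_bijective.mp fun x y hxy => by
      have h2 := (hσ (x, i) (y, i)).mp rfl
      have := σ.injective (Prod.ext hxy h2)
      exact congrArg Prod.fst this)
  refine ⟨g, h, Equiv.ext ?_⟩
  rintro ⟨x, i⟩
  refine Prod.ext rfl ?_
  exact (hσ (x, i) (d, i)).mp rfl

/-- Base group inclusion as a homomorphism. -/
def baseHom (Δ ι : Type*) : (ι → Equiv.Perm Δ) →* Equiv.Perm (Δ × ι) where
  toFun g := wreathPerm g 1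
  map_one' := by ext ⟨x, i⟩ <;> rfl
  map_mul' a b := by ext ⟨x, i⟩ <;> rfl

theorem basePower_le {Δ ι : Type*} [Finite ι] [DecidableEq ι] (X : Subgroup (Equiv.Perm Δ))
    (K : Subgroup (Equiv.Perm (Δ × ι)))
    (h : ∀ i, ∀ x ∈ X, wreathPerm (Pi.mulSingle i x) 1 ∈ K) : basePower X ≤ K := by
  rw [basePower, Subgroup.closure_le]
  rintro _ ⟨g, hg, rfl⟩
  have : g ∈ K.comap (baseHom Δ ι) :=
    Submonoid.pi_mem_of_mulSingle_mem g fun i => h i (g i) (hg i)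
  exact this

theorem lift_cycle {Ω Δ : Type*} [Fintype Ω] [DecidableEq Ω] [Fintype Δ] [DecidableEq Δ]
    (ι : Δ ↪ Ω) {p : ℕ} (c : Equiv.Perm Ω) (hcyc : c.IsCycle) (hcard : c.support.card = p)
    (hs : ∀ y, c y ≠ y → y ∈ Set.range ι) :
    ∃ x : Equiv.Perm Δ, Equiv.Perm.viaEmbeddingHom ι x = c ∧ x.IsCycle ∧ x.support.card = p := by
  have hφ : ∀ j, ∃ j', ι j' = c (ι j) := by
    intro j
    by_cases h : c (ι j) = ι j
    · exact ⟨j, h.symm⟩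
    · exact hs _ fun hh => h (c.injective hh)
  choose φ hφ using hφ
  let x : Equiv.Perm Δ := Equiv.ofBijective φ (Finite.injective_iff_bijective.mp fun i j hij => by
    apply ι.injective
    apply c.injective
    rw [← hφ, ← hφ, hij])
  have hx : Equiv.Perm.viaEmbeddingHom ι x = c := by
    ext y
    rw [Equiv.Perm.viaEmbeddingHom_apply]
    by_cases hy : y ∈ Set.range ι
    · obtain ⟨j, rfl⟩ := hy
      rw [Equiv.Perm.viaEmbedding_apply]
      exact hφ j
    · rw [Equiv.Perm.viaEmbedding_apply_of_notMem _ _ _ hy]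
      by_contra hne
      exact hy (hs y (Ne.symm hne))
  have hct : x.cycleType = c.cycleType := by
    rw [← hx, Equiv.Perm.viaEmbeddingHom_apply, Equiv.Perm.viaEmbedding]
    exact (@Equiv.Perm.cycleType_extendDomain _ _ _ _ _ _ _ (Classical.decPred _) _ _).symm
  refine ⟨x, hx, ?_, ?_⟩
  · rw [← Equiv.Perm.card_cycleType_eq_one, hct, Equiv.Perm.card_cycleType_eq_one]
    exact hcyc
  · rw [← Equiv.Perm.sum_cycleType, hct, Equiv.Perm.sum_cycleType, hcard]

/-- The orbit relation of the group generated by the `p`-cycles. -/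
def pcSetoid {Ω : Type*} [Fintype Ω] [DecidableEq Ω] (G : Subgroup (Equiv.Perm Ω)) (p : ℕ) :
    Setoid Ω where
  r a b := ∃ g ∈ pcGen G p, g a = b
  iseqv :=
    { refl := fun a => ⟨1, Subgroup.one_mem _, rfl⟩
      symm := by
        rintro a b ⟨g, hg, rfl⟩
        exact ⟨g⁻¹, Subgroup.inv_mem _ hg, by simp⟩
      trans := by
        rintro a b c ⟨g, hg, rfl⟩ ⟨h, hh, rfl⟩
        exact ⟨h * g, Subgroup.mul_mem _ hh hg, rfl⟩ }

/-- Corollary `coro:JordanNP`.  If a transitive permutation group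
`G` of degree `n` contains a `p`-cycle for a prime `p`, then there are `m, k` with
`p ≤ m`, `n = m * k`, and transitive groups `X ≤ Y` of degree `m` with `X` primitive
and containing a `p`-cycle, such that up to permutation isomorphism
`X^k ≤ G ≤ Y ≀ Sym(k)` with `X^k` in the base group; moreover if `p < m` then `X`
is 2-transitive. -/
theorem statement_13 {Ω : Type} [Fintype Ω] [DecidableEq Ω] (G : Subgroup (Equiv.Perm Ω))
    (hG : IsTransitivePermGroup G) (n : ℕ) (hn : Fintype.card Ω = n)
    (p : ℕ) (hp : p.Prime)
    (hcyc : ∃ g ∈ G, Equiv.Perm.IsCycle g ∧ (Equiv.Perm.support g).card = p) :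
    ∃ (m k : ℕ) (X Y : Subgroup (Equiv.Perm (Fin m))) (f : Ω ≃ Fin m × Fin k),
      p ≤ m ∧ n = m * k ∧ X ≤ Y ∧
      IsTransitivePermGroup X ∧ IsTransitivePermGroup Y ∧ IsPrimitivePermGroup X ∧
      (∃ x ∈ X, Equiv.Perm.IsCycle x ∧ (Equiv.Perm.support x).card = p) ∧
      basePower X ≤ mapPermGroup f G ∧
      mapPermGroup f G ≤ wreathProduct Y (⊤ : Subgroup (Equiv.Perm (Fin k))) ∧
      (p < m → Is2TransitivePermGroup X) := by
  classical
  obtain ⟨c, hcG, hcyc, hcard⟩ := hcyc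
  obtain ⟨a0, ha0, -⟩ := id hcyc
  -- equivalence classes
  have hrG : ∀ g ∈ G, ∀ a b, (pcSetoid G p).r a b → (pcSetoid G p).r (g a) (g b) := by
    rintro g hg a b ⟨h, hh, rfl⟩
    exact ⟨g * h * g⁻¹, pcGen_conj G p g hg h hh, by simp⟩
  obtain ⟨k, ⟨eK⟩⟩ := Finite.exists_equiv_fin (Quotient (pcSetoid G p))
  let q : Ω → Fin k := fun x => eK (Quotient.mk _ x)
  have hq : ∀ a b, q a = q b ↔ (pcSetoid G p).r a b := by
    intro a b
    simp only [q, eK.injective.eq_iff]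
    exact Quotient.eq
  have hqs : Function.Surjective q := eK.surjective.comp Quotient.mk_surjective
  obtain ⟨m, ⟨s⟩⟩ := Finite.exists_equiv_fin {x : Ω // q x = q a0}
  let ι : Fin m ↪ Ω := s.symm.toEmbedding.trans (Function.Embedding.subtype _)
  have hι : ∀ x, x ∈ Set.range ι ↔ q x = q a0 := by
    intro x
    constructor
    · rintro ⟨j, rfl⟩
      exact (s.symm j).2
    · intro h
      exact ⟨s ⟨x, h⟩, by simp [ι]⟩
  have hτ : ∀ i, ∃ g ∈ G, q (g a0) = i := by
    intro i
    obtain ⟨b, rfl⟩ := hqs i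
    obtain ⟨g, hg, rfl⟩ := hG a0 b
    exact ⟨g, hg, rfl⟩
  choose τ hτG hτ using hτ
  have hqG : ∀ g ∈ G, ∀ a b, q a = q b ↔ q (g a) = q (g b) := by
    intro g hg a b
    rw [hq, hq]
    refine ⟨hrG g hg a b, fun h => ?_⟩
    have := hrG g⁻¹ (G.inv_mem hg) _ _ h
    simpa using this
  have hqF : ∀ i j, q (τ i (ι j)) = i := by
    intro i j
    rw [← (hqG _ (hτG i) a0 (ι j)).mp ((hι _).mp ⟨j, rfl⟩).symm, hτ]
  let F : Fin m × Fin k → Ω := fun x => τ x.2 (ι x.1)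
  have hF : Function.Bijective F := by
    constructor
    · rintro ⟨j, i⟩ ⟨j', i'⟩ h
      have h1 : i = i' := by
        have := congrArg q h
        simpa only [F, hqF] using this
      subst h1
      have h2 := ι.injective ((τ i).injective h)
      exact Prod.ext h2 rfl
    · intro x
      have : (τ (q x))⁻¹ x ∈ Set.range ι := by
        rw [hι, hqG _ (hτG (q x)), hτ]
        simp
      obtain ⟨j, hj⟩ := this
      exact ⟨(j, q x), by simp [F, hj]⟩
  let f : Ω ≃ Fin m × Fin k := (Equiv.ofBijective F hF).symm
  have hfs : ∀ x, f.symm x = F x := fun x => rfl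
  have hqf : ∀ x, q (f.symm x) = x.2 := fun x => hqF _ _
  have hqf' : ∀ y, (f y).2 = q y := fun y => by rw [← hqf, f.symm_apply_apply]
  let X : Subgroup (Equiv.Perm (Fin m)) := G.comap (Equiv.Perm.viaEmbeddingHom ι)
  have hlift : ∀ d ∈ G, d.IsCycle → d.support.card = p → ∀ j, d (ι j) ≠ ι j →
      ∃ x ∈ X, Equiv.Perm.viaEmbeddingHom ι x = d ∧ x.IsCycle ∧ x.support.card = p := by
    intro d hd h1 h2 j hj
    obtain ⟨x, hx, h3, h4⟩ := lift_cycle ι d h1 h2 (by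
      intro y hy
      obtain ⟨i, hi⟩ := h1.sameCycle hj hy
      rw [hι, ← (hι (ι j)).mp (Set.mem_range_self j), eq_comm, hq]
      have hdN : d ∈ pcGen G p := Subgroup.subset_closure ⟨hd, h1, h2⟩
      exact ⟨d ^ i, Subgroup.zpow_mem _ hdN i, hi⟩)
    exact ⟨x, by rw [Subgroup.mem_comap, hx]; exact hd, hx, h3, h4⟩
  have hclosed : ∀ g ∈ pcGen G p, ∀ j, ∃ j', ι j' = g (ι j) := by
    intro g hg j
    have : g (ι j) ∈ Set.range ι := by
      rw [hι, ← (hι (ι j)).mp (Set.mem_range_self j), eq_comm, hq]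
      exact ⟨g, hg, rfl⟩
    exact this
  have hNX : ∀ g ∈ pcGen G p, ∀ j, ∃ x ∈ pcGen X p, ι (x j) = g (ι j) := by
    intro g hg
    unfold pcGen at hg
    induction hg using Subgroup.closure_induction with
    | mem d hd =>
      intro j
      by_cases h : d (ι j) = ι j
      · exact ⟨1, Subgroup.one_mem _, h.symm⟩
      · obtain ⟨x, hx, hxd, h1, h2⟩ := hlift d hd.1 hd.2.1 hd.2.2 j h
        refine ⟨x, Subgroup.subset_closure ⟨hx, h1, h2⟩, ?_⟩
        rw [← hxd, Equiv.Perm.viaEmbeddingHom_apply, Equiv.Perm.viaEmbedding_apply]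
    | one => exact fun j => ⟨1, Subgroup.one_mem _, rfl⟩
    | mul a b _ _ iha ihb =>
      intro j
      obtain ⟨y, hy, hyj⟩ := ihb j
      obtain ⟨x, hx, hxj⟩ := iha (y j)
      exact ⟨x * y, Subgroup.mul_mem _ hx hy, by simp [hxj, hyj]⟩
    | inv a ha iha =>
      intro j
      obtain ⟨j', hj'⟩ := hclosed a⁻¹ (Subgroup.inv_mem _ ha) j
      obtain ⟨x, hx, hxj⟩ := iha j'
      refine ⟨x⁻¹, Subgroup.inv_mem _ hx, ?_⟩
      rw [← hj']
      congr 1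
      rw [Equiv.Perm.inv_eq_iff_eq]
      apply ι.injective
      rw [hxj, hj']
      simp
  have hXt : IsTransitivePermGroup (pcGen X p) := by
    intro i j
    have : (pcSetoid G p).r (ι i) (ι j) := by
      rw [← hq, (hι (ι i)).mp ⟨i, rfl⟩, (hι (ι j)).mp ⟨j, rfl⟩]
    obtain ⟨g, hg, hgij⟩ := this
    obtain ⟨x, hx, hxi⟩ := hNX g hg i
    exact ⟨x, hx, ι.injective (hxi.trans hgij)⟩
  have hprim : IsPrimitivePermGroup X := primitive_of_pcGen hp hXt
  obtain ⟨j0, hj0⟩ := (hι a0).mpr rfl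
  obtain ⟨x, hxX, hxc, hxcyc, hxcard⟩ := hlift c hcG hcyc hcard j0 (by rw [hj0]; exact ha0)
  refine ⟨m, k, X, ⊤, f, ?_, ?_, le_top, hprim.1, ?_, hprim, ⟨x, hxX, hxcyc, hxcard⟩, ?_, ?_, ?_⟩
  · rw [← hxcard]
    simpa using Finset.card_le_univ x.support
  · rw [← hn, Fintype.card_congr f]
    simp
  · intro a b
    obtain ⟨g, -, h⟩ := hprim.1 a b
    exact ⟨g, Subgroup.mem_top _, h⟩
  · apply basePower_le
    intro i y hy
    refine ⟨τ i * Equiv.Perm.viaEmbeddingHom ι y * (τ i)⁻¹,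
      G.mul_mem (G.mul_mem (hτG i) hy) (G.inv_mem (hτG i)), ?_⟩
    apply Equiv.ext
    rintro ⟨j, i'⟩
    change f ((τ i * Equiv.Perm.viaEmbeddingHom ι y * (τ i)⁻¹) (f.symm (j, i'))) = _
    rw [← Equiv.eq_symm_apply, hfs, hfs]
    simp only [F, wreathPerm, Equiv.coe_fn_mk, Equiv.Perm.mul_apply,
      Equiv.Perm.viaEmbeddingHom_apply, Equiv.Perm.one_apply]
    by_cases h : i' = i
    · subst h
      simp [Equiv.Perm.viaEmbedding_apply]
    · rw [Equiv.Perm.viaEmbedding_apply_of_notMem]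
      · simp [Pi.mulSingle_eq_of_ne h]
      · rintro ⟨j', hj'⟩
        rw [Equiv.Perm.eq_inv_iff_eq] at hj'
        have := congrArg q hj'
        rw [hqF, hqF] at this
        exact h this.symm
  · rintro _ ⟨g, hg, rfl⟩
    have : Nonempty (Fin m) := ⟨j0⟩
    obtain ⟨w, h, hwh⟩ := exists_wreath ((permMapEquiv f).toMonoidHom g) (by
      intro u v
      change _ ↔ (f (g (f.symm u))).2 = (f (g (f.symm v))).2
      rw [hqf', hqf', ← hqG g hg, hqf, hqf])
    exact Subgroup.subset_closure ⟨w, h, fun _ => Subgroup.mem_top _, Subgroup.mem_top _, hwh⟩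
  · intro hlt
    exact two_trans_of hp hprim x hxX hxcyc hxcard (by simpa using hlt)
end
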